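/- (Pipher's covering lemma, key disjointness construction.) Let $d \ge 2$ and let $\mathcal{U}'$ be a collection of dyadic rectangles in $\mathbb{R}^d$, of the form $R = I \times R'$ with $I$ the first-coordinate dyadic interval. For each dyadic interval $I$, set $F(I) = \bigcup\{R \in \mathcal{U}' : R_{(1)} = I\}$ and $G(I) = \bigcup_{I \subsetneq I'} F(I')$, and set $H(I) = F(I) \setminus G(I)$. Suppose that for every $R \in \mathcal{U}'$ with $R_{(1)} = I$ one has $|R \cap G(I)| < \frac{3}{4}|R|$. Then (i) the sets $\{H(I)\}_{I \in \mathcal{D}}$ are pairwise disjoint; (ii) for every $R \in \mathcal{U}'$ with $R_{(1)} = I$, $|R \cap H(I)| \ge \frac{1}{4}|R|$; and (iii) $|F(I)| \le |\{M \mathbf{1}_{H(I)} \ge \frac{1}{4}\}| \le C_d |H(I)|$, where $M$ is the strong maximal function. -/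

import Mathlib

open MeasureTheory Set

noncomputable section

/-- The dyadic interval `[j2^k, (j+1)2^k)`. -/
def dI (j k : ℤ) : Set ℝ := Set.Ico ((j:ℝ) * 2 ^ k) (((j:ℝ) + 1) * 2 ^ k)

/-- A dyadic rectangle in `ℝ^d`, encoded by the data `(j_i, k_i)` of its side in each
coordinate. -/
abbrev RectD (d : ℕ) := Fin d → ℤ × ℤ

/-- The dyadic rectangle of `ℝ^d` associated to the data `R`. -/
def rectD {d : ℕ} (R : RectD d) : Set (Fin d → ℝ) :=
  Set.univ.pi fun i => dI (R i).1 (R i).2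

/-- The shadow `⋃_{R ∈ 𝓤} R` of a collection of dyadic rectangles in `ℝ^d`. -/
def shD {d : ℕ} (𝓤 : Set (RectD d)) : Set (Fin d → ℝ) := ⋃ R ∈ 𝓤, rectD R

/-- `F(I) = ⋃ {R ∈ 𝓤' : R_{(i₀)} = I}`. -/
def Fset {d : ℕ} (𝓤' : Set (RectD d)) (i₀ : Fin d) (I : ℤ × ℤ) : Set (Fin d → ℝ) :=
  ⋃ R ∈ {R ∈ 𝓤' | R i₀ = I}, rectD R

/-- `G(I) = ⋃_{I ⊊ I'} F(I')`, union over dyadic intervals strictly containing `I`. -/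
def Gset {d : ℕ} (𝓤' : Set (RectD d)) (i₀ : Fin d) (I : ℤ × ℤ) : Set (Fin d → ℝ) :=
  ⋃ I' : ℤ × ℤ, ⋃ (_ : dI I.1 I.2 ⊂ dI I'.1 I'.2), Fset 𝓤' i₀ I'

/-- `H(I) = F(I) \ G(I)`. -/
def Hset {d : ℕ} (𝓤' : Set (RectD d)) (i₀ : Fin d) (I : ℤ × ℤ) : Set (Fin d → ℝ) :=
  Fset 𝓤' i₀ I \ Gset 𝓤' i₀ I

/-- The superlevel set `{M 1_S ≥ t}` of the strong maximal function of an indicator in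
`ℝ^d`: points in some axis-parallel rectangle `Q` with `|S ∩ Q| ≥ t|Q|`. -/
def maxGEd {d : ℕ} (t : ENNReal) (S : Set (Fin d → ℝ)) : Set (Fin d → ℝ) :=
  {x | ∃ u v : Fin d → ℝ, x ∈ Set.univ.pi (fun i => Set.Ioo (u i) (v i)) ∧
    t * volume (Set.univ.pi fun i => Set.Ioo (u i) (v i))
      ≤ volume (S ∩ Set.univ.pi fun i => Set.Ioo (u i) (v i))}

/-!
If two distinct dyadic intervals `I`, `J` share a point, one of them strictly contains the other, so
a point of `F(I) ∩ F(J)` lies in `G` of the smaller interval; hence the sets `H(I)` are disjoint.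
Since `R ∩ H(I) = R \ G(I)`, the density bound on `H(I)` is the complement of the one on `G(I)`,
and it places the interior of each `R` inside the superlevel set of `M 1_{H(I)}`.

The weak-type bound for indicators is proved by induction on the dimension. On the line it is
Vitali's covering lemma. For a product, if `S` fills a fraction `t` of `P × Q`, then for at least a
fraction `t / 2` of the `x ∈ P` the section of `S` over `x` fills a fraction `t / 2` of `Q`: the
superlevel set of `S` is reached by taking two superlevel sets, one in each variable. Rational
boxes suffice, up to a factor `2 ^ d` in volume, and keep the intermediate sets measurable.
-/

section WeakType

variable {ι κ X Y : Type*} [MeasurableSpace X] [MeasurableSpace Y] {μ : Measure X} {ν : Measure Y}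

/-- The superlevel set `{M 1_S ≥ t}` of the maximal function of an indicator, where `M` averages
over the members of the family `Q`. -/
def maximalSuperlevel (μ : Measure X) (Q : ι → Set X) (t : ENNReal) (S : Set X) : Set X :=
  {x | ∃ i, x ∈ Q i ∧ t * μ (Q i) ≤ μ (S ∩ Q i)}

/-- A differentiation basis whose maximal operator satisfies, at every level, a weak-type bound on
indicators of measurable sets. -/
structure IsWeakTypeBasis (μ : Measure X) (Q : ι → Set X) : Prop where
  measurableSet (i : ι) : MeasurableSet (Q i)
  measure_ne_zero (i : ι) : μ (Q i) ≠ 0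
  measure_ne_top (i : ι) : μ (Q i) ≠ ⊤
  exists_measure_maximalSuperlevel_le (t : ENNReal) (ht₀ : t ≠ 0) (ht : t ≠ ⊤) :
    ∃ C : ENNReal, C ≠ ⊤ ∧ ∀ S, MeasurableSet S → μ (maximalSuperlevel μ Q t S) ≤ C * μ S

lemma exists_pairwiseDisjoint_maximalSuperlevel_subset {Q Q' : ι → Set X} {t : ENNReal} {S : Set X}
    (hQ₀ : ∀ i, μ (Q i) ≠ 0)
    (hQQ' : ∀ i j, (Q i ∩ Q j).Nonempty → μ (Q i) ≤ 2 * μ (Q j) → Q i ⊆ Q' j)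
    (ht₀ : t ≠ 0) (hS : μ S ≠ ⊤) :
    ∃ u ⊆ {i | t * μ (Q i) ≤ μ (S ∩ Q i)}, u.PairwiseDisjoint Q ∧
      maximalSuperlevel μ Q t S ⊆ ⋃ i ∈ u, Q' i := by
  have measure_le : ∀ i ∈ {i | t * μ (Q i) ≤ μ (S ∩ Q i)}, μ (Q i) ≤ μ S / t := fun i hi =>
    ENNReal.le_div_iff_mul_le (.inl ht₀) (.inr hS) |>.2 <|
      mul_comm t _ ▸ hi.trans (measure_mono inter_subset_left)
  have hSt : μ S / t ≠ ⊤ := ENNReal.div_ne_top hS ht₀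
  obtain ⟨u, huT, hu, hcover⟩ := Vitali.exists_disjoint_subfamily_covering_enlargement Q
    {i | t * μ (Q i) ≤ μ (S ∩ Q i)} (fun i => (μ (Q i)).toReal) 2 one_lt_two
    (fun _ _ => ENNReal.toReal_nonneg) _ (fun i hi => ENNReal.toReal_mono hSt (measure_le i hi))
    (fun i _ => nonempty_of_measure_ne_zero (hQ₀ i))
  refine ⟨u, huT, hu, ?_⟩
  rintro x ⟨i, hx, hi⟩
  obtain ⟨j, hj, hij, hle⟩ := hcover i hi
  have hQj : μ (Q j) ≠ ⊤ := ne_top_of_le_ne_top hSt (measure_le j (huT hj))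
  have hle' : μ (Q i) ≤ 2 * μ (Q j) := by
    rwa [← ENNReal.toReal_le_toReal (ne_top_of_le_ne_top hSt (measure_le i hi))
      (ENNReal.mul_ne_top ENNReal.ofNat_ne_top hQj), ENNReal.toReal_mul, ENNReal.toReal_ofNat]
  exact mem_biUnion hj (hQQ' i j hij hle' hx)

lemma tsum_measure_inter_le_of_pairwiseDisjoint {Q : ι → Set X} (hQ : ∀ i, MeasurableSet (Q i))
    {u : Set ι} (hu : u.PairwiseDisjoint Q) (S : Set X) :
    ∑' i : u, μ (S ∩ Q i) ≤ μ S := by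
  have h := tsum_meas_le_meas_iUnion_of_disjoint (μ.restrict S) (fun i : u => hQ i)
    fun i j hij => hu i.2 j.2 (Subtype.coe_ne_coe.2 hij)
  simp only [Measure.restrict_apply (hQ _), inter_comm _ S] at h
  exact h.trans ((measure_mono (subset_univ _)).trans_eq (Measure.restrict_apply_univ S))

lemma measure_maximalSuperlevel_le_of_engulfing [Countable ι] {Q Q' : ι → Set X} {D t : ENNReal}
    (hQ : ∀ i, MeasurableSet (Q i)) (hQ₀ : ∀ i, μ (Q i) ≠ 0)
    (hQ' : ∀ i, μ (Q' i) ≤ D * μ (Q i))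
    (hQQ' : ∀ i j, (Q i ∩ Q j).Nonempty → μ (Q i) ≤ 2 * μ (Q j) → Q i ⊆ Q' j)
    (ht₀ : t ≠ 0) (ht : t ≠ ⊤) {S : Set X} (hS : μ S ≠ ⊤) :
    μ (maximalSuperlevel μ Q t S) ≤ D / t * μ S := by
  obtain ⟨u, huT, hu, hcover⟩ := exists_pairwiseDisjoint_maximalSuperlevel_subset hQ₀ hQQ' ht₀ hS
  calc μ (maximalSuperlevel μ Q t S)
      ≤ μ (⋃ i ∈ u, Q' i) := measure_mono hcover
    _ ≤ ∑' i : u, μ (Q' i) := measure_biUnion_le _ u.to_countable _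
    _ ≤ ∑' i : u, D / t * μ (S ∩ Q i) := ENNReal.tsum_le_tsum fun i => by
        calc μ (Q' i) ≤ D * μ (Q i) := hQ' i
          _ = D / t * (t * μ (Q i)) := by rw [← mul_assoc, ENNReal.div_mul_cancel ht₀ ht]
          _ ≤ D / t * μ (S ∩ Q i) := by gcongr; exact huT i.2
    _ = D / t * ∑' i : u, μ (S ∩ Q i) := ENNReal.tsum_mul_left
    _ ≤ D / t * μ S := by gcongr; exact tsum_measure_inter_le_of_pairwiseDisjoint hQ hu S

namespace IsWeakTypeBasis

lemma of_engulfing [Countable ι] {Q Q' : ι → Set X} {D : ENNReal}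
    (hQ : ∀ i, MeasurableSet (Q i)) (hQ₀ : ∀ i, μ (Q i) ≠ 0) (hQ_top : ∀ i, μ (Q i) ≠ ⊤)
    (hD₀ : D ≠ 0) (hD : D ≠ ⊤) (hQ' : ∀ i, μ (Q' i) ≤ D * μ (Q i))
    (hQQ' : ∀ i j, (Q i ∩ Q j).Nonempty → μ (Q i) ≤ 2 * μ (Q j) → Q i ⊆ Q' j) :
    IsWeakTypeBasis μ Q where
  measurableSet := hQ
  measure_ne_zero := hQ₀
  measure_ne_top := hQ_top
  exists_measure_maximalSuperlevel_le t ht₀ ht := by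
    refine ⟨D / t, ENNReal.div_ne_top hD ht₀, fun S _ => ?_⟩
    by_cases hS : μ S = ⊤
    · rw [hS, ENNReal.mul_top (ENNReal.div_ne_zero.2 ⟨hD₀, ht⟩)]
      exact le_top
    · exact measure_maximalSuperlevel_le_of_engulfing hQ hQ₀ hQ' hQQ' ht₀ ht hS

lemma of_subsingleton [Subsingleton ι] {Q : ι → Set X} (hQ : ∀ i, MeasurableSet (Q i))
    (hQ₀ : ∀ i, μ (Q i) ≠ 0) (hQ_top : ∀ i, μ (Q i) ≠ ⊤) : IsWeakTypeBasis μ Q :=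
  of_engulfing (Q' := Q) hQ hQ₀ hQ_top one_ne_zero ENNReal.one_ne_top (fun _ => (one_mul _).ge)
    fun i j _ _ => (congrArg Q (Subsingleton.elim i j)).subset

lemma comp {Q : ι → Set X} (h : IsWeakTypeBasis μ Q) (f : κ → ι) :
    IsWeakTypeBasis μ (Q ∘ f) where
  measurableSet k := h.measurableSet (f k)
  measure_ne_zero k := h.measure_ne_zero (f k)
  measure_ne_top k := h.measure_ne_top (f k)
  exists_measure_maximalSuperlevel_le t ht₀ ht := by
    obtain ⟨C, hC, hle⟩ := h.exists_measure_maximalSuperlevel_le t ht₀ ht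
    refine ⟨C, hC, fun S hS => (measure_mono ?_).trans (hle S hS)⟩
    rintro x ⟨k, hx⟩
    exact ⟨f k, hx⟩

lemma preimage {Q : ι → Set X} (h : IsWeakTypeBasis μ Q) (e : Y ≃ᵐ X)
    (he : MeasurePreserving e ν μ) : IsWeakTypeBasis ν fun i => e ⁻¹' Q i where
  measurableSet i := e.measurable (h.measurableSet i)
  measure_ne_zero i := he.measure_preimage_equiv (Q i) ▸ h.measure_ne_zero i
  measure_ne_top i := he.measure_preimage_equiv (Q i) ▸ h.measure_ne_top i
  exists_measure_maximalSuperlevel_le t ht₀ ht := by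
    obtain ⟨C, hC, hle⟩ := h.exists_measure_maximalSuperlevel_le t ht₀ ht
    refine ⟨C, hC, fun S hS => ?_⟩
    obtain ⟨S, rfl⟩ := e.injective.preimage_surjective S
    have hpreimage : maximalSuperlevel ν (fun i => e ⁻¹' Q i) t (e ⁻¹' S) =
        e ⁻¹' maximalSuperlevel μ Q t S := by
      ext x
      simp only [maximalSuperlevel, ← preimage_inter, he.measure_preimage_equiv, mem_preimage,
        mem_ofPred_eq]
    rw [hpreimage, he.measure_preimage_equiv, he.measure_preimage_equiv]
    exact hle S (e.measurableSet_preimage.1 hS)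

end IsWeakTypeBasis

/-- The superlevel set obtained by letting the maximal operator of the family `Q` of subsets of `Y`
act on the second variable only. -/
def sectionMaximalSuperlevel (ν : Measure Y) (Q : κ → Set Y) (t : ENNReal) (S : Set (X × Y)) :
    Set (X × Y) :=
  {z | z.2 ∈ maximalSuperlevel ν Q t (Prod.mk z.1 ⁻¹' S)}

lemma measurableSet_sectionMaximalSuperlevel [Countable κ] [SFinite ν] {Q : κ → Set Y}
    (hQ : ∀ k, MeasurableSet (Q k)) (t : ENNReal) {S : Set (X × Y)} (hS : MeasurableSet S) :
    MeasurableSet (sectionMaximalSuperlevel ν Q t S) := by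
  have heq : sectionMaximalSuperlevel ν Q t S =
      ⋃ k, {x | t * ν (Q k) ≤ ν.restrict (Q k) (Prod.mk x ⁻¹' S)} ×ˢ Q k := by
    ext ⟨x, y⟩
    simp only [sectionMaximalSuperlevel, maximalSuperlevel, mem_ofPred_eq, mem_iUnion, mem_prod,
      Measure.restrict_apply (measurable_prodMk_left hS), and_comm]
  rw [heq]
  exact .iUnion fun k =>
    (measurableSet_le measurable_const (measurable_measure_prodMk_left hS)).prod (hQ k)

lemma measure_prod_le_mul_of_forall_section_le [SFinite ν] {A B : Set (X × Y)} {C : ENNReal}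
    (hA : MeasurableSet A) (hB : MeasurableSet B)
    (h : ∀ x, ν (Prod.mk x ⁻¹' A) ≤ C * ν (Prod.mk x ⁻¹' B)) :
    μ.prod ν A ≤ C * μ.prod ν B := by
  rw [Measure.prod_apply hA, Measure.prod_apply hB,
    ← lintegral_const_mul C (measurable_measure_prodMk_left hB)]
  exact lintegral_mono h

lemma IsWeakTypeBasis.exists_measure_sectionMaximalSuperlevel_le [Countable κ] [SFinite ν]
    {Q : κ → Set Y} (hQ : IsWeakTypeBasis ν Q) (μ : Measure X) {t : ENNReal} (ht₀ : t ≠ 0)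
    (ht : t ≠ ⊤) :
    ∃ C : ENNReal, C ≠ ⊤ ∧ ∀ S : Set (X × Y), MeasurableSet S →
      μ.prod ν (sectionMaximalSuperlevel ν Q t S) ≤ C * μ.prod ν S := by
  obtain ⟨C, hC, hle⟩ := hQ.exists_measure_maximalSuperlevel_le t ht₀ ht
  refine ⟨C, hC, fun S hS => measure_prod_le_mul_of_forall_section_le
    (measurableSet_sectionMaximalSuperlevel hQ.measurableSet t hS) hS fun x => ?_⟩
  exact hle _ (measurable_prodMk_left hS)

lemma mul_measure_univ_le_measure_setOf_mul_le_section [IsFiniteMeasure μ] [IsFiniteMeasure ν]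
    (hν : ν univ ≠ 0) {r s : ENNReal} (hr : r ≠ ⊤) {S : Set (X × Y)} (hS : MeasurableSet S)
    (h : (r + s) * (μ univ * ν univ) ≤ μ.prod ν S) :
    s * μ univ ≤ μ {x | r * ν univ ≤ ν (Prod.mk x ⁻¹' S)} := by
  set A : Set X := {x | r * ν univ ≤ ν (Prod.mk x ⁻¹' S)}
  have hA : MeasurableSet A :=
    measurableSet_le measurable_const (measurable_measure_prodMk_left hS)
  have section_le : ∀ x,
      ν (Prod.mk x ⁻¹' S) ≤ A.indicator (fun _ => ν univ) x + r * ν univ := by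
    intro x
    by_cases hx : x ∈ A
    · rw [indicator_of_mem hx]
      exact (measure_mono (subset_univ _)).trans le_self_add
    · exact (not_le.1 hx).le.trans le_add_self
  have hsum : (s * μ univ) * ν univ + r * ν univ * μ univ ≤
      μ A * ν univ + r * ν univ * μ univ := by
    calc (s * μ univ) * ν univ + r * ν univ * μ univ
        = (r + s) * (μ univ * ν univ) := by ring
      _ ≤ ∫⁻ x, ν (Prod.mk x ⁻¹' S) ∂μ := h.trans_eq (Measure.prod_apply hS)
      _ ≤ ∫⁻ x, (A.indicator (fun _ => ν univ) x + r * ν univ) ∂μ := lintegral_mono section_le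
      _ = μ A * ν univ + r * ν univ * μ univ := by
        rw [lintegral_add_right _ measurable_const, lintegral_indicator_const hA,
          lintegral_const, mul_comm (ν univ)]
  have hfinite : r * ν univ * μ univ ≠ ⊤ := by finiteness
  exact (ENNReal.mul_le_mul_iff_left hν (measure_ne_top ν _)).1
    ((ENNReal.add_le_add_iff_right hfinite).1 hsum)

lemma mul_measure_le_measure_setOf_mul_le_section [SFinite μ] [SFinite ν] {P : Set X} {Q : Set Y}
    (hP : MeasurableSet P) (hPtop : μ P ≠ ⊤) (hQ₀ : ν Q ≠ 0) (hQtop : ν Q ≠ ⊤) {r s : ENNReal}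
    (hr : r ≠ ⊤) {S : Set (X × Y)} (hS : MeasurableSet S)
    (h : (r + s) * μ.prod ν (P ×ˢ Q) ≤ μ.prod ν (S ∩ P ×ˢ Q)) :
    s * μ P ≤ μ ({x | r * ν Q ≤ ν (Prod.mk x ⁻¹' S ∩ Q)} ∩ P) := by
  have : IsFiniteMeasure (μ.restrict P) := isFiniteMeasure_restrict.2 hPtop
  have : IsFiniteMeasure (ν.restrict Q) := isFiniteMeasure_restrict.2 hQtop
  rw [Measure.prod_prod, ← Measure.restrict_apply hS, ← Measure.prod_restrict] at h
  simpa only [Measure.restrict_apply_univ, Measure.restrict_apply (measurable_prodMk_left hS),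
    Measure.restrict_apply' hP, univ_inter] using mul_measure_univ_le_measure_setOf_mul_le_section
      (μ := μ.restrict P) (ν := ν.restrict Q) (r := r) (s := s) (by simpa using hQ₀) hr hS
      (by simpa using h)

namespace IsWeakTypeBasis

lemma maximalSuperlevel_prod_subset [SFinite μ] [SFinite ν] {P : ι → Set X} {Q : κ → Set Y}
    (hP : IsWeakTypeBasis μ P) (hQ : IsWeakTypeBasis ν Q) {r s : ENNReal} (hr : r ≠ ⊤)
    {S : Set (X × Y)} (hS : MeasurableSet S) :
    maximalSuperlevel (μ.prod ν) (fun p : ι × κ => P p.1 ×ˢ Q p.2) (r + s) S ⊆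
      Prod.swap ⁻¹' sectionMaximalSuperlevel μ P s
        (Prod.swap ⁻¹' sectionMaximalSuperlevel ν Q r S) := by
  rintro ⟨x, y⟩ ⟨⟨i, k⟩, ⟨hx, hy⟩, hle⟩
  have hfraction := mul_measure_le_measure_setOf_mul_le_section (hP.measurableSet i)
    (hP.measure_ne_top i) (hQ.measure_ne_zero k) (hQ.measure_ne_top k) hr hS hle
  exact ⟨i, hx, hfraction.trans (measure_mono (inter_subset_inter_left _ fun _ h => ⟨k, hy, h⟩))⟩

lemma prod [Countable ι] [Countable κ] [SFinite μ] [SFinite ν] {P : ι → Set X} {Q : κ → Set Y}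
    (hP : IsWeakTypeBasis μ P) (hQ : IsWeakTypeBasis ν Q) :
    IsWeakTypeBasis (μ.prod ν) fun p : ι × κ => P p.1 ×ˢ Q p.2 where
  measurableSet p := (hP.measurableSet p.1).prod (hQ.measurableSet p.2)
  measure_ne_zero p := by
    rw [Measure.prod_prod]
    exact mul_ne_zero (hP.measure_ne_zero p.1) (hQ.measure_ne_zero p.2)
  measure_ne_top p := by
    rw [Measure.prod_prod]
    exact ENNReal.mul_ne_top (hP.measure_ne_top p.1) (hQ.measure_ne_top p.2)
  exists_measure_maximalSuperlevel_le t ht₀ ht := by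
    have half_ne_zero : t / 2 ≠ 0 := (ENNReal.half_pos ht₀).ne'
    have half_ne_top : t / 2 ≠ ⊤ := ENNReal.div_ne_top ht two_ne_zero
    obtain ⟨A, hA, hAle⟩ :=
      hP.exists_measure_sectionMaximalSuperlevel_le ν half_ne_zero half_ne_top
    obtain ⟨B, hB, hBle⟩ :=
      hQ.exists_measure_sectionMaximalSuperlevel_le μ half_ne_zero half_ne_top
    refine ⟨A * B, ENNReal.mul_ne_top hA hB, fun S hS => ?_⟩
    set E := sectionMaximalSuperlevel ν Q (t / 2) S
    have hE : MeasurableSet E := measurableSet_sectionMaximalSuperlevel hQ.measurableSet _ hS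
    have measure_swap (U : Set (X × Y)) : ν.prod μ (Prod.swap ⁻¹' U) = μ.prod ν U :=
      Measure.measurePreserving_swap.measure_preimage_equiv (f := MeasurableEquiv.prodComm) U
    calc μ.prod ν (maximalSuperlevel _ _ t S)
        = μ.prod ν (maximalSuperlevel _ _ (t / 2 + t / 2) S) := by rw [ENNReal.add_halves]
      _ ≤ μ.prod ν (Prod.swap ⁻¹' sectionMaximalSuperlevel μ P (t / 2) (Prod.swap ⁻¹' E)) :=
          measure_mono (hP.maximalSuperlevel_prod_subset hQ half_ne_top hS)
      _ = ν.prod μ (sectionMaximalSuperlevel μ P (t / 2) (Prod.swap ⁻¹' E)) := by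
          rw [← measure_swap, ← preimage_comp, Prod.swap_swap_eq, preimage_id]
      _ ≤ A * ν.prod μ (Prod.swap ⁻¹' E) := hAle _ (measurable_swap hE)
      _ = A * μ.prod ν E := by rw [measure_swap]
      _ ≤ A * (B * μ.prod ν S) := by gcongr; exact hBle S hS
      _ = A * B * μ.prod ν S := (mul_assoc _ _ _).symm

theorem pi {n : ℕ} {X : Fin n → Type*} [∀ i, MeasurableSpace (X i)] {μ : ∀ i, Measure (X i)}
    [∀ i, SigmaFinite (μ i)] {ι : Fin n → Type*} [∀ i, Countable (ι i)]
    {Q : ∀ i, ι i → Set (X i)} (hQ : ∀ i, IsWeakTypeBasis (μ i) (Q i)) :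
    IsWeakTypeBasis (Measure.pi μ) fun p : ∀ i, ι i => univ.pi fun i => Q i (p i) := by
  induction n with
  | zero =>
    exact of_subsingleton (fun p => .univ_pi fun i => (hQ i).measurableSet (p i))
      (fun p => by simp) (fun p => by simp)
  | succ n ih =>
    have hprod := (hQ 0).prod (ih fun i => hQ i.succ)
    convert (hprod.preimage _ (measurePreserving_piFinSuccAbove μ 0)).comp
      fun p : ∀ i, ι i => (p 0, Fin.tail p) using 2 with p
    ext x
    rw [mem_univ_pi, Fin.forall_fin_succ]
    exact and_congr_right' mem_univ_pi.symm

end IsWeakTypeBasis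

end WeakType

section StrongMaximal

/-- Endpoints of the nonempty bounded open intervals with rational endpoints. -/
abbrev RatInterval := {p : ℚ × ℚ // p.1 < p.2}

/-- The open interval of the real line with the given rational endpoints. -/
def ratIoo (p : RatInterval) : Set ℝ := Ioo (p.1.1 : ℝ) (p.1.2 : ℝ)

lemma ratInterval_fst_lt_snd (p : RatInterval) : (p.1.1 : ℝ) < p.1.2 := Rat.cast_lt.2 p.2

lemma volume_ratIoo (p : RatInterval) :
    volume (ratIoo p) = ENNReal.ofReal ((p.1.2 : ℝ) - p.1.1) := Real.volume_Ioo

lemma isWeakTypeBasis_ratIoo : IsWeakTypeBasis volume ratIoo := by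
  -- An interval meeting `(a, b)` and of length at most `2 (b - a)` lies in the fivefold dilate.
  let enlargement (p : RatInterval) : Set ℝ :=
    Ioo (p.1.1 - 2 * (p.1.2 - p.1.1) : ℝ) (p.1.2 + 2 * (p.1.2 - p.1.1))
  refine .of_engulfing (Q' := enlargement) (D := ENNReal.ofReal 5) (fun p => measurableSet_Ioo)
    (fun p => ?_) (fun p => ?_) (by simp) ENNReal.ofReal_ne_top (fun p => ?_) ?_
  · simpa [volume_ratIoo] using ratInterval_fst_lt_snd p
  · simp [volume_ratIoo]
  · rw [volume_ratIoo, Real.volume_Ioo, ← ENNReal.ofReal_mul (by norm_num)]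
    exact ENNReal.ofReal_le_ofReal (by linarith)
  · rintro p q ⟨z, hzp, hzq⟩ hpq
    have hlength : (p.1.2 - p.1.1 : ℝ) ≤ 2 * (q.1.2 - q.1.1) := by
      have hq := ratInterval_fst_lt_snd q
      rwa [volume_ratIoo, volume_ratIoo, ← ENNReal.ofReal_ofNat 2,
        ← ENNReal.ofReal_mul zero_le_two, ENNReal.ofReal_le_ofReal_iff (by linarith)] at hpq
    exact Ioo_subset_Ioo (by linarith [hzp.2, hzq.1]) (by linarith [hzp.1, hzq.2])

lemma exists_Ioo_subset_ratIoo {u v : ℝ} (huv : u < v) :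
    ∃ p, Ioo u v ⊆ ratIoo p ∧ volume (ratIoo p) ≤ 2 * volume (Ioo u v) := by
  obtain ⟨a, hau, hua⟩ := exists_rat_btwn (show u - (v - u) / 2 < u by linarith)
  obtain ⟨b, hvb, hbv⟩ := exists_rat_btwn (show v < v + (v - u) / 2 by linarith)
  refine ⟨⟨(a, b), Rat.cast_lt.1 (hua.trans (huv.trans hvb))⟩, Ioo_subset_Ioo hua.le hvb.le, ?_⟩
  rw [volume_ratIoo, Real.volume_Ioo, ← ENNReal.ofReal_ofNat 2, ← ENNReal.ofReal_mul zero_le_two]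
  exact ENNReal.ofReal_le_ofReal (by linarith)

lemma maxGEd_subset_maximalSuperlevel_ratIoo {d : ℕ} (t : ENNReal) (S : Set (Fin d → ℝ)) :
    maxGEd t S ⊆ maximalSuperlevel volume
      (fun p : Fin d → RatInterval => univ.pi fun i => ratIoo (p i)) (t / 2 ^ d) S := by
  rintro x ⟨u, v, hx, hle⟩
  choose p hsub hvol using fun i =>
    exists_Ioo_subset_ratIoo ((hx i (mem_univ i)).1.trans (hx i (mem_univ i)).2)
  have hsub_pi : (univ.pi fun i => Ioo (u i) (v i)) ⊆ univ.pi fun i => ratIoo (p i) :=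
    pi_mono fun i _ => hsub i
  have hvol_pi : volume (univ.pi fun i => ratIoo (p i)) ≤
      2 ^ d * volume (univ.pi fun i => Ioo (u i) (v i)) := by
    rw [volume_pi_pi, volume_pi_pi]
    calc ∏ i, volume (ratIoo (p i)) ≤ ∏ i, 2 * volume (Ioo (u i) (v i)) :=
          Finset.prod_le_prod' fun i _ => hvol i
      _ = 2 ^ d * ∏ i, volume (Ioo (u i) (v i)) := by
          rw [Finset.prod_mul_distrib, Finset.prod_const, Finset.card_univ, Fintype.card_fin]
  refine ⟨p, hsub_pi hx, ?_⟩
  calc t / 2 ^ d * volume (univ.pi fun i => ratIoo (p i))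
      ≤ t / 2 ^ d * (2 ^ d * volume (univ.pi fun i => Ioo (u i) (v i))) := by gcongr
    _ = t * volume (univ.pi fun i => Ioo (u i) (v i)) := by
        rw [← mul_assoc, ENNReal.div_mul_cancel (by simp) (by simp)]
    _ ≤ volume (S ∩ univ.pi fun i => Ioo (u i) (v i)) := hle
    _ ≤ volume (S ∩ univ.pi fun i => ratIoo (p i)) := by gcongr

theorem exists_volume_maxGEd_le (d : ℕ) {t : ENNReal} (ht₀ : t ≠ 0) (ht : t ≠ ⊤) :
    ∃ C : ENNReal, C ≠ ⊤ ∧ ∀ S : Set (Fin d → ℝ), MeasurableSet S →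
      volume (maxGEd t S) ≤ C * volume S := by
  obtain ⟨C, hC, hle⟩ :=
    (IsWeakTypeBasis.pi fun _ : Fin d => isWeakTypeBasis_ratIoo).exists_measure_maximalSuperlevel_le
      (t / 2 ^ d) (ENNReal.div_ne_zero.2 ⟨ht₀, by simp⟩) (ENNReal.div_ne_top ht (by simp))
  exact ⟨C, hC, fun S hS =>
    (measure_mono (maxGEd_subset_maximalSuperlevel_ratIoo t S)).trans (hle S hS)⟩

end StrongMaximal

section Dyadic

lemma mem_dI_iff_floor_eq {j k : ℤ} {x : ℝ} : x ∈ dI j k ↔ ⌊x / 2 ^ k⌋ = j := by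
  have hk : (0 : ℝ) < 2 ^ k := by positivity
  rw [Int.floor_eq_iff, le_div_iff₀ hk, div_lt_iff₀ hk, dI, mem_Ico]

lemma volume_dI (j k : ℤ) : volume (dI j k) = ENNReal.ofReal (2 ^ k) := by
  rw [dI, Real.volume_Ico]
  ring_nf

lemma dI_injective : Function.Injective fun I : ℤ × ℤ => dI I.1 I.2 := by
  rintro ⟨j, k⟩ ⟨j', k'⟩ (h : dI j k = dI j' k')
  have hlength : ENNReal.ofReal (2 ^ k) = ENNReal.ofReal (2 ^ k') := by
    rw [← volume_dI j, h, volume_dI]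
  rw [ENNReal.ofReal_eq_ofReal_iff (by positivity) (by positivity)] at hlength
  obtain rfl : k = k' := zpow_right_injective₀ two_pos (by norm_num) hlength
  have hleft : (j : ℝ) * 2 ^ k ∈ dI j k := left_mem_Ico.2 (by gcongr; exact lt_add_one _)
  have hj : j = j' := (mem_dI_iff_floor_eq.1 hleft).symm.trans (mem_dI_iff_floor_eq.1 (h ▸ hleft))
  rw [hj]

lemma dI_subset_dI {I J : ℤ × ℤ} {x : ℝ} (hIJ : I.2 ≤ J.2) (hxI : x ∈ dI I.1 I.2)
    (hxJ : x ∈ dI J.1 J.2) : dI I.1 I.2 ⊆ dI J.1 J.2 := by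
  obtain ⟨n, hn⟩ := Int.le.dest hIJ
  have floor_coarse (y : ℝ) : ⌊y / 2 ^ J.2⌋ = ⌊y / 2 ^ I.2⌋ / (2 ^ n : ℕ) := by
    rw [← Int.floor_div_natCast, div_div, ← hn, zpow_add₀ two_ne_zero, zpow_natCast, Nat.cast_pow,
      Nat.cast_ofNat]
  intro y hy
  rw [mem_dI_iff_floor_eq] at hxI hxJ hy ⊢
  rw [floor_coarse, hy, ← hxI, ← floor_coarse, hxJ]

variable {d : ℕ}

lemma measurableSet_rectD (R : RectD d) : MeasurableSet (rectD R) :=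
  .univ_pi fun _ => measurableSet_Ico

lemma volume_rectD_ne_top (R : RectD d) : volume (rectD R) ≠ ⊤ := by
  rw [rectD, volume_pi_pi]
  exact ENNReal.prod_ne_top fun i _ => by simp [volume_dI]

lemma volume_shD_le_volume_maxGEd {t : ENNReal} {𝓤 : Set (RectD d)} {S : Set (Fin d → ℝ)}
    (h : ∀ R ∈ 𝓤, t * volume (rectD R) ≤ volume (rectD R ∩ S)) :
    volume (shD 𝓤) ≤ volume (maxGEd t S) := by
  let openRect (R : RectD d) : Set (Fin d → ℝ) :=
    univ.pi fun i => Ioo (((R i).1 : ℝ) * 2 ^ (R i).2) ((((R i).1 : ℝ) + 1) * 2 ^ (R i).2)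
  have ae_eq (R : RectD d) : rectD R =ᵐ[volume] openRect R :=
    Measure.univ_pi_Ico_ae_eq_Icc.trans Measure.univ_pi_Ioo_ae_eq_Icc.symm
  have shD_ae_eq : shD 𝓤 =ᵐ[volume] ⋃ R ∈ 𝓤, openRect R :=
    .countable_bUnion 𝓤.to_countable fun R _ => ae_eq R
  rw [measure_congr shD_ae_eq]
  refine measure_mono (iUnion₂_subset fun R hR x hx => ⟨_, _, hx, ?_⟩)
  change t * volume (openRect R) ≤ volume (S ∩ openRect R)
  rw [← measure_congr (ae_eq R), inter_comm, ← measure_congr ((ae_eq R).inter (.refl _ S))]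
  exact h R hR

end Dyadic

section Pipher

lemma mul_measure_le_measure_sdiff {X : Type*} [MeasurableSpace X] {μ : Measure X} {A G : Set X}
    {s t : ENNReal} (hG : MeasurableSet G) (hA : μ A ≠ ⊤) (hst : s + t = 1)
    (h : μ (A ∩ G) ≤ s * μ A) : t * μ A ≤ μ (A \ G) := by
  have hs : s ≠ ⊤ := ne_top_of_le_ne_top ENNReal.one_ne_top (hst ▸ le_self_add)
  refine (ENNReal.add_le_add_iff_left (ENNReal.mul_ne_top hs hA)).1 ?_
  calc s * μ A + t * μ A = μ A := by rw [← add_mul, hst, one_mul]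
    _ = μ (A ∩ G) + μ (A \ G) := (measure_inter_add_sdiff A hG).symm
    _ ≤ s * μ A + μ (A \ G) := by gcongr

variable {d : ℕ} (𝓤 : Set (RectD d)) (i₀ : Fin d) (I : ℤ × ℤ)

lemma Fset_eq_shD : Fset 𝓤 i₀ I = shD {R ∈ 𝓤 | R i₀ = I} := rfl

lemma measurableSet_Fset : MeasurableSet (Fset 𝓤 i₀ I) :=
  .biUnion (to_countable _) fun R _ => measurableSet_rectD R

lemma measurableSet_Gset : MeasurableSet (Gset 𝓤 i₀ I) :=
  .iUnion fun J => .iUnion fun _ => measurableSet_Fset 𝓤 i₀ J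

lemma measurableSet_Hset : MeasurableSet (Hset 𝓤 i₀ I) :=
  (measurableSet_Fset 𝓤 i₀ I).diff (measurableSet_Gset 𝓤 i₀ I)

variable {𝓤 i₀ I}

lemma apply_mem_dI_of_mem_Fset {x : Fin d → ℝ} (hx : x ∈ Fset 𝓤 i₀ I) : x i₀ ∈ dI I.1 I.2 := by
  obtain ⟨R, ⟨-, rfl⟩, hxR⟩ := mem_iUnion₂.1 hx
  exact hxR i₀ (mem_univ i₀)

lemma Fset_inter_Fset_subset_Gset {J : ℤ × ℤ} (hne : I ≠ J) (hIJ : I.2 ≤ J.2) :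
    Fset 𝓤 i₀ I ∩ Fset 𝓤 i₀ J ⊆ Gset 𝓤 i₀ I := by
  rintro x ⟨hxI, hxJ⟩
  have hsub : dI I.1 I.2 ⊆ dI J.1 J.2 :=
    dI_subset_dI hIJ (apply_mem_dI_of_mem_Fset hxI) (apply_mem_dI_of_mem_Fset hxJ)
  exact mem_iUnion₂.2 ⟨J, hsub.ssubset_of_ne (dI_injective.ne hne), hxJ⟩

variable (𝓤 i₀) in
lemma pairwise_disjoint_Hset : Pairwise (Function.onFun Disjoint (Hset 𝓤 i₀)) := by
  intro I J hne
  rw [Function.onFun]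
  wlog hIJ : I.2 ≤ J.2 generalizing I J
  · exact (this hne.symm (le_of_not_ge hIJ)).symm
  · exact disjoint_left.2 fun x hxI hxJ =>
      hxI.2 (Fset_inter_Fset_subset_Gset hne hIJ ⟨hxI.1, hxJ.1⟩)

lemma rectD_inter_Hset {R : RectD d} (hR : R ∈ 𝓤) :
    rectD R ∩ Hset 𝓤 i₀ (R i₀) = rectD R \ Gset 𝓤 i₀ (R i₀) := by
  have hsub : rectD R ⊆ Fset 𝓤 i₀ (R i₀) :=
    subset_biUnion_of_mem (u := rectD) (show R ∈ {R' ∈ 𝓤 | R' i₀ = R i₀} from ⟨hR, rfl⟩)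
  rw [Hset, ← inter_sdiff_assoc, inter_eq_left.2 hsub]

lemma mul_volume_rectD_le_volume_inter_Hset {R : RectD d} {s t : ENNReal} (hR : R ∈ 𝓤)
    (hst : s + t = 1)
    (hG : volume (rectD R ∩ Gset 𝓤 i₀ (R i₀)) ≤ s * volume (rectD R)) :
    t * volume (rectD R) ≤ volume (rectD R ∩ Hset 𝓤 i₀ (R i₀)) := by
  rw [rectD_inter_Hset hR]
  exact mul_measure_le_measure_sdiff (measurableSet_Gset 𝓤 i₀ _) (volume_rectD_ne_top R) hst hG

lemma volume_Fset_le_volume_maxGEd_Hset {t : ENNReal}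
    (h : ∀ R ∈ 𝓤, t * volume (rectD R) ≤ volume (rectD R ∩ Hset 𝓤 i₀ (R i₀))) :
    volume (Fset 𝓤 i₀ I) ≤ volume (maxGEd t (Hset 𝓤 i₀ I)) := by
  rw [Fset_eq_shD]
  refine volume_shD_le_volume_maxGEd ?_
  rintro R ⟨hR, rfl⟩
  exact h R hR

end Pipher

theorem stmt_17_general (d : ℕ) (i₀ : Fin d) {s t : ENNReal} (hst : s + t = 1) (ht₀ : t ≠ 0) :
    ∃ C : ℝ, 0 < C ∧ ∀ 𝓤 : Set (RectD d),
      (∀ R ∈ 𝓤, volume (rectD R ∩ Gset 𝓤 i₀ (R i₀)) ≤ s * volume (rectD R)) →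
      ((∀ I₁ I₂ : ℤ × ℤ, I₁ ≠ I₂ → Hset 𝓤 i₀ I₁ ∩ Hset 𝓤 i₀ I₂ = ∅) ∧
       (∀ R ∈ 𝓤, t * volume (rectD R) ≤ volume (rectD R ∩ Hset 𝓤 i₀ (R i₀))) ∧
       (∀ I : ℤ × ℤ,
          volume (Fset 𝓤 i₀ I) ≤ volume (maxGEd t (Hset 𝓤 i₀ I)) ∧
          volume (maxGEd t (Hset 𝓤 i₀ I)) ≤ ENNReal.ofReal C * volume (Hset 𝓤 i₀ I))) := by
  have ht : t ≠ ⊤ := ne_top_of_le_ne_top ENNReal.one_ne_top (hst ▸ le_add_self)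
  obtain ⟨C, hC, hweak⟩ := exists_volume_maxGEd_le d ht₀ ht
  have hC_le : C ≤ ENNReal.ofReal (C.toReal + 1) :=
    (ENNReal.le_ofReal_iff_toReal_le hC (by positivity)).2 (by linarith)
  refine ⟨C.toReal + 1, by positivity, fun 𝓤 hG => ?_⟩
  have hdensity : ∀ R ∈ 𝓤, t * volume (rectD R) ≤ volume (rectD R ∩ Hset 𝓤 i₀ (R i₀)) :=
    fun R hR => mul_volume_rectD_le_volume_inter_Hset hR hst (hG R hR)
  refine ⟨fun I₁ I₂ hne => (pairwise_disjoint_Hset 𝓤 i₀ hne).inter_eq, hdensity, fun I => ⟨?_, ?_⟩⟩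
  · exact volume_Fset_le_volume_maxGEd_Hset hdensity
  · exact (hweak _ (measurableSet_Hset 𝓤 i₀ I)).trans (by gcongr)

lemma three_quarters_add_quarter : (3 / 4 + 1 / 4 : ENNReal) = 1 := by
  rw [ENNReal.div_add_div_same, three_add_one_eq_four, ENNReal.div_self four_ne_zero (by simp)]

/-- Pipher's covering lemma, key disjointness construction: with `i₀` the
first coordinate, if every `R ∈ 𝓤'` satisfies `|R ∩ G(R_{(1)})| < ¾|R|`, then the sets
`H(I)` are pairwise disjoint, every `R ∈ 𝓤'` satisfies `|R ∩ H(R_{(1)})| ≥ ¼|R|`, and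
`|F(I)| ≤ |{M 1_{H(I)} ≥ ¼}| ≤ C_d |H(I)|`. -/
theorem stmt_17 (d : ℕ) (hd : 2 ≤ d) (i₀ : Fin d) (hi₀ : (i₀ : ℕ) = 0) :
    ∃ C : ℝ, 0 < C ∧ ∀ 𝓤' : Set (RectD d),
      (∀ R ∈ 𝓤', volume (rectD R ∩ Gset 𝓤' i₀ (R i₀)) < (3/4 : ENNReal) * volume (rectD R)) →
      ((∀ I₁ I₂ : ℤ × ℤ, I₁ ≠ I₂ → Hset 𝓤' i₀ I₁ ∩ Hset 𝓤' i₀ I₂ = ∅) ∧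
       (∀ R ∈ 𝓤', (1/4 : ENNReal) * volume (rectD R) ≤ volume (rectD R ∩ Hset 𝓤' i₀ (R i₀))) ∧
       (∀ I : ℤ × ℤ,
          volume (Fset 𝓤' i₀ I) ≤ volume (maxGEd (1/4 : ENNReal) (Hset 𝓤' i₀ I)) ∧
          volume (maxGEd (1/4 : ENNReal) (Hset 𝓤' i₀ I))
            ≤ ENNReal.ofReal C * volume (Hset 𝓤' i₀ I))) := by
  obtain ⟨C, hC, h⟩ := stmt_17_general d i₀ three_quarters_add_quarter (by simp)
  exact ⟨C, hC, fun 𝓤' hG => h 𝓤' fun R hR => (hG R hR).le⟩
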